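/- Let w(y) = (1 + √(1−y))^(−1/2), y(x) = 8x(2x+1)/(4x+1)², v(x) = x(2x+1)(4x+1), A(x, z) = w(y(x)·e^z)/w(y(x)), and C(x, z) = e^(−x·z)·A(x, z) for x > 0 and real z with y(x)·e^z < 1. Then C satisfies the partial differential equation v(x)·(∂C/∂x + z·C) − ∂C/∂z = 0 at every such (x, z), and C(x, 0) = 1. -/

import Mathlib

open Real

noncomputable def w (y : ℝ) : ℝ := (1 + Real.sqrt (1 - y)) ^ (-(1 / 2 : ℝ))

noncomputable def yFun (x : ℝ) : ℝ := 8 * x * (2 * x + 1) / (4 * x + 1) ^ 2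

noncomputable def v (x : ℝ) : ℝ := x * (2 * x + 1) * (4 * x + 1)

noncomputable def A (x z : ℝ) : ℝ := w (yFun x * Real.exp z) / w (yFun x)

noncomputable def C (x z : ℝ) : ℝ := Real.exp (-(x * z)) * A x z

/-!
If `C = e^(-x z) f(Y e^z) / f(Y)` with `Y = Y(x)`, and `θ(y) = y f'(y) / f(y)`, then the logarithmic
derivatives of `C` are `∂_z log C = θ(Y e^z) - x` and
`∂_x log C = (Y'/Y) (θ(Y e^z) - θ(Y)) - z`. The equation `V (∂_x log C + z) = ∂_z log C` therefore
holds as soon as `V Y' = Y` and `θ(Y) = x`. For `f = w` and `Y = yFun`, both conditions are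
rational identities in `x`, because `√(1 - yFun x) = 1 / (4 x + 1)`.
-/

/-- The central moment generating function of the power series family generated by `f`: the law
with parameter `y` has moment generating function `z ↦ f (y * exp z) / f y`. It is parametrized by
the centre `x`, with `Y x` the corresponding value of `y`; that `x` is the mean of this law is
not part of the definition. -/
noncomputable def centralMgf (f Y : ℝ → ℝ) (x z : ℝ) : ℝ :=
  exp (-(x * z)) * (f (Y x * exp z) / f (Y x))

section CentralMgf

variable {f Y : ℝ → ℝ} {x z : ℝ}

lemma centralMgf_zero_right (hf_ne : f (Y x) ≠ 0) : centralMgf f Y x 0 = 1 := by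
  simp [centralMgf, hf_ne]

lemma hasDerivAt_centralMgf_right {fz' : ℝ} (hfz : HasDerivAt f fz' (Y x * exp z)) :
    HasDerivAt (fun t => centralMgf f Y x t)
      (exp (-(x * z)) * ((Y x * exp z * fz' - x * f (Y x * exp z)) / f (Y x))) z := by
  have h_exp : HasDerivAt (fun t => exp (-(x * t))) (exp (-(x * z)) * -(x * 1)) z :=
    ((hasDerivAt_id' z).const_mul x).neg.exp
  have h_num : HasDerivAt (fun t => f (Y x * exp t)) (fz' * (Y x * exp z)) z :=
    hfz.comp z ((hasDerivAt_exp z).const_mul (Y x))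
  exact (h_exp.mul (h_num.div_const (f (Y x)))).congr_deriv (by ring)

lemma hasDerivAt_centralMgf_left {Y' f' fz' : ℝ} (hf_ne : f (Y x) ≠ 0) (hY : HasDerivAt Y Y' x)
    (hf : HasDerivAt f f' (Y x)) (hfz : HasDerivAt f fz' (Y x * exp z)) :
    HasDerivAt (fun t => centralMgf f Y t z)
      (exp (-(x * z)) * (Y' * (exp z * fz' * f (Y x) - f (Y x * exp z) * f') / f (Y x) ^ 2)
        - z * centralMgf f Y x z) x := by
  have h_exp : HasDerivAt (fun t => exp (-(t * z))) (exp (-(x * z)) * -(1 * z)) x :=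
    ((hasDerivAt_id' x).mul_const z).neg.exp
  have h_num : HasDerivAt (fun t => f (Y t * exp z)) (fz' * (Y' * exp z)) x :=
    HasDerivAt.comp (h₂ := f) x hfz (hY.mul_const (exp z))
  have h_den : HasDerivAt (fun t => f (Y t)) (f' * Y') x := hf.comp x hY
  exact (h_exp.mul (h_num.div h_den hf_ne)).congr_deriv
    (by simp only [centralMgf, Pi.div_apply]; ring)

theorem centralMgf_pde {V Y' f' fz' : ℝ} (hf_ne : f (Y x) ≠ 0) (hY : HasDerivAt Y Y' x)
    (hf : HasDerivAt f f' (Y x)) (hfz : HasDerivAt f fz' (Y x * exp z))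
    (h_var : V * Y' = Y x) (h_mean : Y x * f' = x * f (Y x)) :
    V * (deriv (fun t => centralMgf f Y t z) x + z * centralMgf f Y x z)
      - deriv (fun t => centralMgf f Y x t) z = 0 := by
  rw [(hasDerivAt_centralMgf_left hf_ne hY hf hfz).deriv, (hasDerivAt_centralMgf_right hfz).deriv,
    sub_add_cancel, sub_eq_zero]
  calc V * (exp (-(x * z)) *
        (Y' * (exp z * fz' * f (Y x) - f (Y x * exp z) * f') / f (Y x) ^ 2))
    _ = exp (-(x * z)) * ((V * Y' * exp z * fz' * f (Y x) - f (Y x * exp z) * (V * Y' * f'))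
          / f (Y x) ^ 2) := by ring
    _ = exp (-(x * z)) * ((Y x * exp z * fz' * f (Y x) - f (Y x * exp z) * (x * f (Y x)))
          / f (Y x) ^ 2) := by rw [h_var, h_mean]
    _ = exp (-(x * z)) * ((Y x * exp z * fz' - x * f (Y x * exp z)) / f (Y x)) := by
      field_simp

end CentralMgf

lemma w_pos (y : ℝ) : 0 < w y := by
  unfold w
  positivity

lemma hasDerivAt_w {y : ℝ} (hy : y < 1) :
    HasDerivAt w (w y / (4 * √(1 - y) * (1 + √(1 - y)))) y := by
  have h_one_sub : 0 < 1 - y := sub_pos.mpr hy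
  have h_sqrt_ne : √(1 - y) ≠ 0 := (sqrt_pos.mpr h_one_sub).ne'
  have h_base : HasDerivAt (fun t => 1 + √(1 - t)) (-1 / (2 * √(1 - y))) y :=
    (((hasDerivAt_id' y).const_sub 1).sqrt h_one_sub.ne').const_add 1
  have h_base_ne : 1 + √(1 - y) ≠ 0 := by positivity
  refine (h_base.rpow_const (p := -(1 / 2)) (Or.inl h_base_ne)).congr_deriv ?_
  rw [rpow_sub_one h_base_ne, w]
  field_simp
  norm_num

lemma mul_deriv_w {y : ℝ} (hy : y < 1) :
    y * (w y / (4 * √(1 - y) * (1 + √(1 - y)))) = (1 / √(1 - y) - 1) / 4 * w y := by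
  have h_sqrt : 0 < √(1 - y) := sqrt_pos.mpr (sub_pos.mpr hy)
  have h_factor : y = (1 - √(1 - y)) * (1 + √(1 - y)) := by
    linear_combination sq_sqrt (sub_nonneg.mpr hy.le)
  calc y * (w y / (4 * √(1 - y) * (1 + √(1 - y))))
    _ = y / (4 * √(1 - y) * (1 + √(1 - y))) * w y := by ring
    _ = (1 - √(1 - y)) * (1 + √(1 - y)) / (4 * √(1 - y) * (1 + √(1 - y))) * w y := by
      rw [← h_factor]
    _ = (1 / √(1 - y) - 1) / 4 * w y := by field_simp

lemma one_sub_yFun {x : ℝ} (hx : 4 * x + 1 ≠ 0) : 1 - yFun x = (1 / (4 * x + 1)) ^ 2 := by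
  rw [yFun, one_sub_div (pow_ne_zero 2 hx), one_div_pow]
  ring

lemma yFun_lt_one {x : ℝ} (hx : 4 * x + 1 ≠ 0) : yFun x < 1 := by
  rw [← sub_pos, one_sub_yFun hx]
  positivity

lemma sqrt_one_sub_yFun {x : ℝ} (hx : 0 < 4 * x + 1) : √(1 - yFun x) = 1 / (4 * x + 1) := by
  rw [one_sub_yFun hx.ne', sqrt_sq (by positivity)]

lemma hasDerivAt_yFun {x : ℝ} (hx : 4 * x + 1 ≠ 0) :
    HasDerivAt yFun (8 / (4 * x + 1) ^ 3) x := by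
  have h_num : HasDerivAt (fun t : ℝ => 8 * t * (2 * t + 1))
      (8 * 1 * (2 * x + 1) + 8 * x * (2 * 1)) x :=
    ((hasDerivAt_id' x).const_mul 8).mul (((hasDerivAt_id' x).const_mul 2).add_const 1)
  have h_den : HasDerivAt (fun t : ℝ => (4 * t + 1) ^ 2) (2 * (4 * x + 1) ^ 1 * (4 * 1)) x :=
    (((hasDerivAt_id' x).const_mul 4).add_const 1).pow 2
  refine (h_num.div h_den (pow_ne_zero 2 hx)).congr_deriv ?_
  field_simp
  ring

lemma v_mul_deriv_yFun (x : ℝ) : v x * (8 / (4 * x + 1) ^ 3) = yFun x := by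
  unfold v yFun
  field_simp

lemma yFun_mul_deriv_w {x : ℝ} (hx : 0 < 4 * x + 1) :
    yFun x * (w (yFun x) / (4 * √(1 - yFun x) * (1 + √(1 - yFun x)))) = x * w (yFun x) := by
  rw [mul_deriv_w (yFun_lt_one hx.ne'), sqrt_one_sub_yFun hx, one_div_one_div]
  ring

lemma C_eq_centralMgf : C = centralMgf w yFun := rfl

theorem central_mgf_pde_general (x z : ℝ) (hx : -1 / 4 < x) (hz : yFun x * exp z < 1) :
    DifferentiableAt ℝ (fun t => C t z) x ∧
    DifferentiableAt ℝ (fun t => C x t) z ∧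
    v x * (deriv (fun t => C t z) x + z * C x z) - deriv (fun t => C x t) z = 0 ∧
    C x 0 = 1 := by
  have h_pos : 0 < 4 * x + 1 := by linarith
  have hw_ne : w (yFun x) ≠ 0 := (w_pos _).ne'
  have hY := hasDerivAt_yFun h_pos.ne'
  have hw := hasDerivAt_w (yFun_lt_one h_pos.ne')
  have hwz := hasDerivAt_w hz
  rw [C_eq_centralMgf]
  exact ⟨(hasDerivAt_centralMgf_left hw_ne hY hw hwz).differentiableAt,
    (hasDerivAt_centralMgf_right hwz).differentiableAt,
    centralMgf_pde hw_ne hY hw hwz (v_mul_deriv_yFun x) (yFun_mul_deriv_w h_pos),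
    centralMgf_zero_right hw_ne⟩

theorem central_mgf_pde (x z : ℝ) (hx : 0 < x) (hz : yFun x * Real.exp z < 1) :
    DifferentiableAt ℝ (fun t => C t z) x ∧
    DifferentiableAt ℝ (fun t => C x t) z ∧
    v x * (deriv (fun t => C t z) x + z * C x z) - deriv (fun t => C x t) z = 0 ∧
    C x 0 = 1 :=
  central_mgf_pde_general x z (by linarith) hz
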